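/- (Theorem 3) Assume each φ_i is (1/γ)-smooth with γ > 0 and g is μ-strongly convex with μ > 0; let κ = R²/(μγ) ≥ 1 and κ' = dR'²/(nμγ) ≥ 1, and let (x*, y*) be a saddle point of F on X×Y. There is a universal constant c > 0 (independent of the problem data) such that: if the SPD1-VR step sizes are η = (γ/(128R²))·min{dκ/(nκ'), 1} and τ = (nμ/(128R'²))·min{nκ'/(dκ), 1}, and the inner-loop length satisfies T ≥ c·max{dκ, nκ'}, then the outer iterates satisfy E[Δ_K] ≤ (3/5)^K · Δ_0, where Δ_k = ‖x̃^k − x*‖²/η + ‖ỹ^k − y*‖²/τ. -/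

import Mathlib

/-!
Linear convergence of SPD1-VR.

**Proximal inequality.** Each coordinate update is a proximal step of a strongly convex function:
`η g_j` has modulus `η μ`, and `(τ/d) φ_i*` has modulus `τ γ / d`, because the conjugate of a
`(1/γ)`-smooth function is `γ`-strongly convex (`phiStar_strongConvex`, from the descent lemma).
Combining the quadratic growth of the two prox objectives and of the saddle point problem gives
the scalar extragradient inequality `extragradient_scalar`: the squared distance to the solution
contracts by `1 - m/2`, minus the squared displacement of the extrapolated point, up to the
squared difference of the two gradient estimates.

**One iteration.** Adding the inequalities for `x_{j_t}` and `y_{i_t}`, the bilinear products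
`a_ij (x̄_j - x*_j) (ȳ_i - y*_i)` cancel on every path (`IsStep.progress`). Since `x̄_j` depends
only on `(i', j)` and `ȳ_i` only on `(i, j')`, the remaining products have mean zero under the
independent draws of `i` and of `j`. With `M = max (d κ) (n κ')` and `ε = 1 / (16384 M)` the step
sizes are `η = d / (128 μ M)` and `τ = n d / (128 γ M)`, so that `η μ = 128 ε d`,
`τ γ / d = 128 ε n` and `η τ R², η τ R'² ≤ ε n d`. The noise from the extrapolation is then
absorbed by the displacement terms, and the noise from the reference point costs `12 ε` times the
Lyapunov functions of the current and of the reference point. Hence (`sum_step_le`)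
`E P_{t+1} ≤ (1 - 52 ε) E P_t + 12 ε E P_0`, where `P` is the Lyapunov function and `P_0` its
value at the reference point.

**Stages.** If `ε T ≥ 1` this recursion gives
`E P_T ≤ (3/13 + 10/13 · 1/53) E P_0 ≤ 3/5 E P_0` (`recursion_bound`).
To pass from the average over one index quadruple to the average over all sample paths, observe
that proximal points are unique, so the iterates depend only on the indices drawn so far, and that
redrawing one quadruple preserves the uniform distribution (`sum_resample`).
-/

/-- Real-valued restriction of the convex conjugate `φ*(y) = sup_u {y·u − φ(u)}`. -/
noncomputable def phiStar (φ : ℝ → ℝ) (y : ℝ) : ℝ :=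
  sSup (Set.range fun u => y * u - φ u)

/-- Effective domain of the convex conjugate of `φ`. -/
def Ydom (φ : ℝ → ℝ) : Set ℝ :=
  {y | BddAbove (Set.range fun u => y * u - φ u)}

/-! ### Proximal points -/

/-- `p` is a proximal point: it minimizes `h z + (z - u)² / 2` over `z ∈ S`. -/
def IsProx (S : Set ℝ) (h : ℝ → ℝ) (u p : ℝ) : Prop :=
  p ∈ S ∧ ∀ z ∈ S, h p + (p - u) ^ 2 / 2 ≤ h z + (z - u) ^ 2 / 2

/-- Quadratic growth of an `m`-strongly convex function away from a minimizer. -/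
lemma quadratic_growth {S : Set ℝ} {f : ℝ → ℝ} {m : ℝ}
    (hf : ConvexOn ℝ S (fun z => f z - m / 2 * z ^ 2)) {p : ℝ} (hp : p ∈ S)
    (hmin : ∀ z ∈ S, f p ≤ f z) {z : ℝ} (hz : z ∈ S) :
    f p + m / 2 * (z - p) ^ 2 ≤ f z := by
  have key : ∀ θ : ℝ, 0 < θ → θ < 1 → (1 - θ) * (m / 2 * (z - p) ^ 2) ≤ f z - f p := by
    intro θ h0 h1
    have h := hf.2 hp hz (by linarith : (0 : ℝ) ≤ 1 - θ) h0.le (by ring)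
    have hm := hmin _ (hf.1 hp hz (by linarith : (0 : ℝ) ≤ 1 - θ) h0.le (by ring))
    simp only [smul_eq_mul] at h hm
    refine le_of_mul_le_mul_left ?_ h0
    nlinarith
  have hlim : Filter.Tendsto (fun θ : ℝ => (1 - θ) * (m / 2 * (z - p) ^ 2))
      (nhdsWithin 0 (Set.Ioi 0)) (nhds ((1 - 0) * (m / 2 * (z - p) ^ 2))) := by
    apply Filter.Tendsto.mono_left _ nhdsWithin_le_nhds
    exact Continuous.tendsto (by fun_prop) 0
  have := le_of_tendsto hlim (by
    filter_upwards [Ioo_mem_nhdsGT (zero_lt_one' ℝ)] with θ hθ using key θ hθ.1 hθ.2)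
  linarith

lemma IsProx.growth {S : Set ℝ} {h : ℝ → ℝ} {m u p : ℝ}
    (hh : ConvexOn ℝ S (fun z => h z - m / 2 * z ^ 2)) (hp : IsProx S h u p)
    {z : ℝ} (hz : z ∈ S) :
    h p + (p - u) ^ 2 / 2 + (1 + m) / 2 * (z - p) ^ 2 ≤ h z + (z - u) ^ 2 / 2 := by
  refine quadratic_growth (f := fun z => h z + (z - u) ^ 2 / 2) ?_ hp.1 hp.2 hz
  refine ⟨hh.1, fun x hx y hy s t hs ht hst => ?_⟩
  have := hh.2 hx hy hs ht hst
  simp only [smul_eq_mul] at this ⊢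
  obtain rfl : s = 1 - t := by linarith
  nlinarith

lemma IsProx.unique {S : Set ℝ} {h : ℝ → ℝ} {m u p q : ℝ} (hm : 0 ≤ m)
    (hh : ConvexOn ℝ S (fun z => h z - m / 2 * z ^ 2))
    (hp : IsProx S h u p) (hq : IsProx S h u q) : p = q := by
  have h1 := hp.growth hh hq.1
  have h2 := hq.2 p hp.1
  have h3 : (q - p) ^ 2 = 0 := by nlinarith [sq_nonneg (q - p)]
  have := pow_eq_zero_iff (two_ne_zero) |>.1 h3
  linarith

/-- One scalar extragradient step: `p` is the extrapolated point, `q` the new iterate, `s` the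
solution, which is optimal for the linear perturbation of slope `w`. -/
lemma extragradient_scalar {S : Set ℝ} {h : ℝ → ℝ} {m x v vb w p q s : ℝ}
    (hm0 : 0 ≤ m) (hm1 : m ≤ 1 / 2)
    (hh : ConvexOn ℝ S (fun z => h z - m / 2 * z ^ 2))
    (hs : s ∈ S) (hopt : ∀ z ∈ S, h s + w * s ≤ h z + w * z)
    (hp : IsProx S h (x - vb) p) (hq : IsProx S h (x - v) q) :
    (q - s) ^ 2 + (p - x) ^ 2 / 2 + 2 * (v - w) * (p - s)
      ≤ (1 - m / 2) * (x - s) ^ 2 + (v - vb) ^ 2 := by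
  have h1 := hq.growth hh hs
  have h2 := hp.growth hh hq.1
  have h3 : h s + w * s + m / 2 * (p - s) ^ 2 ≤ h p + w * p := by
    refine quadratic_growth (f := fun z => h z + w * z) ?_ hs hopt hp.1
    refine ⟨hh.1, fun x hx y hy s t hs ht hst => ?_⟩
    have := hh.2 hx hy hs ht hst
    simp only [smul_eq_mul] at this ⊢
    linarith
  -- Young's inequality for the error made by the extrapolated gradient
  have h4 := sq_nonneg ((v - vb) + (q - p))
  have h5 := mul_nonneg hm0 (sq_nonneg (q - p))
  have h6 := mul_nonneg hm0 (sq_nonneg (s - q))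
  have h7 := mul_nonneg (by linarith : 0 ≤ 1 / 2 - m) (sq_nonneg (p - x))
  have h8 := mul_nonneg hm0 (sq_nonneg ((p - x) + (p - s)))
  nlinarith

/-! ### Conjugates of smooth functions -/

/-- The descent lemma for a function with Lipschitz derivative. -/
lemma descent {φ : ℝ → ℝ} {γ : ℝ} (hd : Differentiable ℝ φ)
    (hL : ∀ u v : ℝ, |deriv φ u - deriv φ v| ≤ (1 / γ) * |u - v|) (u v : ℝ) :
    φ v ≤ φ u + deriv φ u * (v - u) + 1 / γ * (v - u) ^ 2 / 2 := by
  set ψ : ℝ → ℝ := fun v => φ u + deriv φ u * (v - u) + 1 / γ * (v - u) ^ 2 / 2 - φ v with hψ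
  have hder : ∀ v, HasDerivAt ψ (deriv φ u + 1 / γ * (v - u) - deriv φ v) v := by
    intro v
    have e1 : HasDerivAt (fun v : ℝ => v - u) 1 v := (hasDerivAt_id v).sub_const u
    have := (((e1.const_mul (deriv φ u)).const_add (φ u)).add
      (((e1.pow 2).const_mul (1 / γ)).div_const 2)).sub (hd v).hasDerivAt
    refine this.congr_deriv ?_
    push_cast
    ring
  have hdiff : Differentiable ℝ ψ := fun v => (hder v).differentiableAt
  have h0 : ψ u = 0 := by simp [hψ]
  have hv : 0 ≤ ψ v := by
    rcases le_total u v with h | h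
    · have hmono : MonotoneOn ψ (Set.Ici u) := by
        apply monotoneOn_of_deriv_nonneg (convex_Ici u) hdiff.continuous.continuousOn
          hdiff.differentiableOn
        intro x hx
        rw [interior_Ici] at hx
        rw [(hder x).deriv]
        have hx' : u < x := hx
        have := hL x u
        rw [abs_of_pos (sub_pos.2 hx')] at this
        linarith [le_abs_self (deriv φ x - deriv φ u)]
      rw [← h0]
      exact hmono Set.self_mem_Ici h h
    · have hanti : AntitoneOn ψ (Set.Iic u) := by
        apply antitoneOn_of_deriv_nonpos (convex_Iic u) hdiff.continuous.continuousOn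
          hdiff.differentiableOn
        intro x hx
        rw [interior_Iic] at hx
        rw [(hder x).deriv]
        have hx' : x < u := hx
        have := hL x u
        rw [abs_of_neg (sub_neg.2 hx')] at this
        linarith [neg_abs_le (deriv φ x - deriv φ u)]
      rw [← h0]
      exact hanti h Set.self_mem_Iic h
  simp only [hψ] at hv
  linarith

/-- The conjugate of a `(1/γ)`-smooth function is `γ`-strongly convex on its domain. -/
lemma phiStar_strongConvex {φ : ℝ → ℝ} {γ : ℝ} (hγ : 0 < γ) (hd : Differentiable ℝ φ)
    (hL : ∀ u v : ℝ, |deriv φ u - deriv φ v| ≤ (1 / γ) * |u - v|) :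
    ConvexOn ℝ (Ydom φ) (fun y => phiStar φ y - γ / 2 * y ^ 2) := by
  have hconv : Convex ℝ (Ydom φ) := by
    rintro x ⟨B, hB⟩ y ⟨C, hC⟩ s t hs ht hst
    refine ⟨s * B + t * C, ?_⟩
    rintro _ ⟨u, rfl⟩
    have h1 := mul_le_mul_of_nonneg_left (hB ⟨u, rfl⟩) hs
    have h2 := mul_le_mul_of_nonneg_left (hC ⟨u, rfl⟩) ht
    simp only [smul_eq_mul] at *
    obtain rfl : s = 1 - t := by linarith
    linarith
  -- testing the supremum at `u + γ (y - φ' u)` gains `γ/2 (y - φ' u)²`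
  have hlow : ∀ y ∈ Ydom φ, ∀ u,
      y * u - φ u + γ / 2 * (y - deriv φ u) ^ 2 ≤ phiStar φ y := by
    intro y hy u
    have h1 : y * (u + γ * (y - deriv φ u)) - φ (u + γ * (y - deriv φ u)) ≤ phiStar φ y :=
      le_csSup (s := Set.range fun u => y * u - φ u) hy ⟨_, rfl⟩
    have h2 := descent hd hL u (u + γ * (y - deriv φ u))
    have h3 : 1 / γ * (u + γ * (y - deriv φ u) - u) ^ 2 / 2
        = γ / 2 * (y - deriv φ u) ^ 2 := by
      field_simp
      ring
    rw [h3] at h2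
    linarith
  refine ⟨hconv, fun x hx y hy s t hs ht hst => ?_⟩
  have hle : phiStar φ (s * x + t * y)
      ≤ s * phiStar φ x + t * phiStar φ y - γ / 2 * (s * t * (x - y) ^ 2) := by
    apply csSup_le (Set.range_nonempty _)
    rintro _ ⟨u, rfl⟩
    have h1 := mul_le_mul_of_nonneg_left (hlow x hx u) hs
    have h2 := mul_le_mul_of_nonneg_left (hlow y hy u) ht
    have h3 := mul_nonneg hγ.le (sq_nonneg (s * (x - deriv φ u) + t * (y - deriv φ u)))
    obtain rfl : s = 1 - t := by linarith
    simp only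
    nlinarith
  simp only [smul_eq_mul]
  obtain rfl : s = 1 - t := by linarith
  nlinarith

/-! ### One iteration -/

/-- One SPD1-VR iteration from `(x, y)` to `(x', y')` with extrapolated point `(xb, yb)`,
reference point `(xt, yt)` and sampled indices `i, i', j, j'`. The functions `G j`, `H i` are the
already scaled proximal terms `η g_j` and `(τ/d) φ_i*`. -/
structure IsStep {n d : ℕ} (a : Fin n → Fin d → ℝ) (Xs : Fin d → Set ℝ) (G : Fin d → ℝ → ℝ)
    (Ys : Fin n → Set ℝ) (H : Fin n → ℝ → ℝ) (η τ : ℝ)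
    (xt : Fin d → ℝ) (yt : Fin n → ℝ) (x : Fin d → ℝ) (y : Fin n → ℝ)
    (i i' : Fin n) (j j' : Fin d)
    (xb : Fin d → ℝ) (yb : Fin n → ℝ) (x' : Fin d → ℝ) (y' : Fin n → ℝ) : Prop where
  xb_prox : IsProx (Xs j) (G j)
    (x j - η * (a i' j * (y i' - yt i') + (∑ l, a l j * yt l) / (n : ℝ))) (xb j)
  yb_prox : IsProx (Ys i) (H i)
    (y i + τ * (a i j' * (x j' - xt j') + (∑ l, a i l * xt l) / (d : ℝ))) (yb i)
  x_ne : ∀ l, l ≠ j → x' l = x l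
  x_prox : IsProx (Xs j) (G j)
    (x j - η * (a i j * (yb i - yt i) + (∑ l, a l j * yt l) / (n : ℝ))) (x' j)
  y_ne : ∀ l, l ≠ i → y' l = y l
  y_prox : IsProx (Ys i) (H i)
    (y i + τ * (a i j * (xb j - xt j) + (∑ l, a i l * xt l) / (d : ℝ))) (y' i)

/-- The Lyapunov function `‖x - x*‖²/η + ‖y - y*‖²/τ`. -/
noncomputable def lyap {n d : ℕ} (η τ : ℝ) (xs : Fin d → ℝ) (ys : Fin n → ℝ)
    (x : Fin d → ℝ) (y : Fin n → ℝ) : ℝ :=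
  (∑ j, (x j - xs j) ^ 2) / η + (∑ i, (y i - ys i) ^ 2) / τ

/-- The iteration is deterministic once the indices are sampled. -/
lemma IsStep.unique {n d : ℕ} {a : Fin n → Fin d → ℝ} {Xs : Fin d → Set ℝ} {G : Fin d → ℝ → ℝ}
    {Ys : Fin n → Set ℝ} {H : Fin n → ℝ → ℝ} {η τ mx my : ℝ} (hmx : 0 ≤ mx) (hmy : 0 ≤ my)
    (hG : ∀ j, ConvexOn ℝ (Xs j) (fun z => G j z - mx / 2 * z ^ 2))
    (hH : ∀ i, ConvexOn ℝ (Ys i) (fun z => H i z - my / 2 * z ^ 2))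
    {xt : Fin d → ℝ} {yt : Fin n → ℝ} {x : Fin d → ℝ} {y : Fin n → ℝ}
    {i i' : Fin n} {j j' : Fin d}
    {xb₁ : Fin d → ℝ} {yb₁ : Fin n → ℝ} {x₁ : Fin d → ℝ} {y₁ : Fin n → ℝ}
    {xb₂ : Fin d → ℝ} {yb₂ : Fin n → ℝ} {x₂ : Fin d → ℝ} {y₂ : Fin n → ℝ}
    (h₁ : IsStep a Xs G Ys H η τ xt yt x y i i' j j' xb₁ yb₁ x₁ y₁)
    (h₂ : IsStep a Xs G Ys H η τ xt yt x y i i' j j' xb₂ yb₂ x₂ y₂) :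
    x₁ = x₂ ∧ y₁ = y₂ := by
  have hx := h₁.xb_prox.unique hmx (hG j) h₂.xb_prox
  have hy := h₁.yb_prox.unique hmy (hH i) h₂.yb_prox
  constructor
  · funext l
    by_cases hl : l = j
    · subst hl
      exact h₁.x_prox.unique hmx (hG l) (hy ▸ h₂.x_prox)
    · rw [h₁.x_ne l hl, h₂.x_ne l hl]
  · funext l
    by_cases hl : l = i
    · subst hl
      exact h₁.y_prox.unique hmy (hH l) (hx ▸ h₂.y_prox)
    · rw [h₁.y_ne l hl, h₂.y_ne l hl]

lemma sum_sq_update {m : ℕ} {x x' s : Fin m → ℝ} {j : Fin m} (h : ∀ l, l ≠ j → x' l = x l) :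
    ∑ l, (x' l - s l) ^ 2 = ∑ l, (x l - s l) ^ 2 + ((x' j - s j) ^ 2 - (x j - s j) ^ 2) := by
  have : ∑ l, ((x' l - s l) ^ 2 - (x l - s l) ^ 2) = (x' j - s j) ^ 2 - (x j - s j) ^ 2 := by
    apply Finset.sum_eq_single j
    · intro l _ hl
      rw [h l hl]
      ring
    · simp
  rw [Finset.sum_sub_distrib] at this
  linarith

lemma scaled_progress {η A B C m V W Vb e : ℝ} (hη : 0 < η)
    (h : A + B / 2 + 2 * (η * V - η * W) * e ≤ (1 - m / 2) * C + (η * V - η * Vb) ^ 2) :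
    A / η + 1 / (2 * η) * B + 2 * (V - W) * e
      ≤ C / η - m / 2 / η * C + η * (V - Vb) ^ 2 := by
  have e1 : A / η + 1 / (2 * η) * B + 2 * (V - W) * e
      = (A + B / 2 + 2 * (η * V - η * W) * e) / η := by
    field_simp
  have e2 : C / η - m / 2 / η * C + η * (V - Vb) ^ 2
      = ((1 - m / 2) * C + (η * V - η * Vb) ^ 2) / η := by
    field_simp
  rw [e1, e2]
  exact div_le_div_of_nonneg_right h hη.le

/-- Pathwise progress of one iteration. The bilinear coupling terms of the `x` and `y` updates
cancel; what remains of them are the two terms of zero mean `(D_j - a_ij e_i) (x̄_j - x*_j)` and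
`(E_i - a_ij e_j) (ȳ_i - y*_i)`. -/
lemma IsStep.progress {n d : ℕ} {a : Fin n → Fin d → ℝ} {Xs : Fin d → Set ℝ} {G : Fin d → ℝ → ℝ}
    {Ys : Fin n → Set ℝ} {H : Fin n → ℝ → ℝ} {η τ mx my : ℝ} (hη : 0 < η) (hτ : 0 < τ)
    (hmx : 0 ≤ mx) (hmy : 0 ≤ my) (hmx1 : mx ≤ 1 / 2) (hmy1 : my ≤ 1 / 2)
    (hG : ∀ j, ConvexOn ℝ (Xs j) (fun z => G j z - mx / 2 * z ^ 2))
    (hH : ∀ i, ConvexOn ℝ (Ys i) (fun z => H i z - my / 2 * z ^ 2))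
    {xs : Fin d → ℝ} {ys : Fin n → ℝ} (hxs : ∀ j, xs j ∈ Xs j) (hys : ∀ i, ys i ∈ Ys i)
    (hxopt : ∀ j, ∀ z ∈ Xs j, G j (xs j) + η * ((∑ l, a l j * ys l) / n) * xs j
      ≤ G j z + η * ((∑ l, a l j * ys l) / n) * z)
    (hyopt : ∀ i, ∀ z ∈ Ys i, H i (ys i) + -(τ * ((∑ l, a i l * xs l) / d)) * ys i
      ≤ H i z + -(τ * ((∑ l, a i l * xs l) / d)) * z)
    {xt : Fin d → ℝ} {yt : Fin n → ℝ} {x : Fin d → ℝ} {y : Fin n → ℝ}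
    {i i' : Fin n} {j j' : Fin d}
    {xb : Fin d → ℝ} {yb : Fin n → ℝ} {x' : Fin d → ℝ} {y' : Fin n → ℝ}
    (h : IsStep a Xs G Ys H η τ xt yt x y i i' j j' xb yb x' y') :
    lyap η τ xs ys x' y' ≤ lyap η τ xs ys x y
      - mx / 2 / η * (x j - xs j) ^ 2 - my / 2 / τ * (y i - ys i) ^ 2
      - 1 / (2 * η) * (xb j - x j) ^ 2 - 1 / (2 * τ) * (yb i - y i) ^ 2
      - 2 * (((∑ l, a l j * yt l) / n - (∑ l, a l j * ys l) / n - a i j * (yt i - ys i))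
          * (xb j - xs j))
      + 2 * (((∑ l, a i l * xt l) / d - (∑ l, a i l * xs l) / d - a i j * (xt j - xs j))
          * (yb i - ys i))
      + 3 * η * (a i j ^ 2 * (yb i - y i) ^ 2 + a i j ^ 2 * (y i - yt i) ^ 2
          + a i' j ^ 2 * (y i' - yt i') ^ 2)
      + 3 * τ * (a i j ^ 2 * (xb j - x j) ^ 2 + a i j ^ 2 * (x j - xt j) ^ 2
          + a i j' ^ 2 * (x j' - xt j') ^ 2) := by
  have hx := extragradient_scalar hmx hmx1 (hG j) (hxs j) (hxopt j) h.xb_prox h.x_prox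
  have hyb := h.yb_prox
  have hyq := h.y_prox
  rw [← sub_neg_eq_add] at hyb hyq
  have hy := extragradient_scalar hmy hmy1 (hH i) (hys i) (hyopt i) hyb hyq
  unfold lyap
  rw [sum_sq_update h.x_ne, sum_sq_update h.y_ne]
  generalize (∑ l, (x l - xs l) ^ 2) = Sx
  generalize (∑ l, (y l - ys l) ^ 2) = Sy
  generalize (∑ l, a l j * yt l) / (n : ℝ) = g1 at *
  generalize (∑ l, a l j * ys l) / (n : ℝ) = g2 at *
  generalize (∑ l, a i l * xt l) / (d : ℝ) = g3 at *
  generalize (∑ l, a i l * xs l) / (d : ℝ) = g4 at *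
  have three : ∀ p q r : ℝ, (p + q - r) ^ 2 ≤ 3 * (p ^ 2 + q ^ 2 + r ^ 2) := by
    intro p q r
    nlinarith [sq_nonneg (p - q), sq_nonneg (p + r), sq_nonneg (q + r)]
  have nx := mul_le_mul_of_nonneg_left
    (three (a i j * (yb i - y i)) (a i j * (y i - yt i)) (a i' j * (y i' - yt i'))) hη.le
  have ny := mul_le_mul_of_nonneg_left
    (three (a i j * (xb j - x j)) (a i j * (x j - xt j)) (a i j' * (x j' - xt j'))) hτ.le
  simp only [← mul_neg] at hy
  have hx' := scaled_progress hη hx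
  have hy' := scaled_progress hτ hy
  have sx : ((x' j - xs j) ^ 2 - (x j - xs j) ^ 2) / η
      = (x' j - xs j) ^ 2 / η - (x j - xs j) ^ 2 / η := sub_div _ _ _
  have sy : ((y' i - ys i) ^ 2 - (y i - ys i) ^ 2) / τ
      = (y' i - ys i) ^ 2 / τ - (y i - ys i) ^ 2 / τ := sub_div _ _ _
  rw [add_div Sx, add_div Sy, sx, sy]
  have vx : a i j * (yb i - yt i) + g1 - (a i' j * (y i' - yt i') + g1)
      = a i j * (yb i - y i) + a i j * (y i - yt i) - a i' j * (y i' - yt i') := by ring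
  have vy : -(a i j * (xb j - xt j) + g3) - -(a i j' * (x j' - xt j') + g3)
      = -(a i j * (xb j - x j) + a i j * (x j - xt j) - a i j' * (x j' - xt j')) := by ring
  rw [vx] at hx'
  rw [vy, neg_sq] at hy'
  linarith

/-! ### Expected progress of one iteration -/

lemma sum_sq_sub_le {m : ℕ} (x t s : Fin m → ℝ) :
    ∑ j, (x j - t j) ^ 2 ≤ 2 * ∑ j, (x j - s j) ^ 2 + 2 * ∑ j, (t j - s j) ^ 2 := by
  rw [Finset.mul_sum, Finset.mul_sum, ← Finset.sum_add_distrib]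
  exact Finset.sum_le_sum fun j _ => by nlinarith [sq_nonneg ((x j - s j) + (t j - s j))]

/-- The gradient noise caused by extrapolating the other block is absorbed by the squared
displacement of that extrapolation, `U` being a sum of squared displacements. -/
lemma noise_fresh {p q η τ ε R U : ℝ} (hp : 0 < p) (hq : 0 < q) (hτ : 0 < τ)
    (hεp : ε * p ≤ 1 / 16384) (hR : η * τ * R ^ 2 ≤ ε * p * q) (hU : 0 ≤ U) :
    3 * η * (p * (R ^ 2 * U)) ≤ 1 / (2 * τ) * (p * (q * U)) := by
  have hr : η * R ^ 2 ≤ ε * p * q * (1 / τ) := by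
    rw [mul_one_div, le_div_iff₀ hτ]
    linarith
  calc 3 * η * (p * (R ^ 2 * U)) = 3 * (η * R ^ 2) * (p * U) := by ring
    _ ≤ 3 * (ε * p * q * (1 / τ)) * (p * U) := by gcongr
    _ = 3 * (ε * p) * (q * (1 / τ) * (p * U)) := by ring
    _ ≤ 3 * (1 / 16384) * (q * (1 / τ) * (p * U)) := by gcongr
    _ ≤ (1 / 2) * (q * (1 / τ) * (p * U)) := by gcongr; norm_num
    _ = 1 / (2 * τ) * (p * (q * U)) := by field_simp

/-- The noise of the variance-reduced gradient, `Y = ‖y - ỹ‖²`, contributes at most `6 ε` times the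
Lyapunov terms `S / τ` of the current iterate and `T / τ` of the reference point. -/
lemma noise_reference {p q η τ ε R Y S T : ℝ} (hp : 0 < p) (hq : 0 < q)
    (hτ : 0 < τ) (hε : 0 < ε) (hR : η * τ * R ^ 2 ≤ ε * p * q) (hY : 0 ≤ Y)
    (hYS : Y ≤ 2 * S + 2 * T) :
    3 * η * (p * (q * (R ^ 2 * Y)))
      ≤ 6 * ε * (p * p * q * q * (S / τ)) + 6 * ε * (p * p * q * q * (T / τ)) := by
  have hr : η * R ^ 2 ≤ ε * p * q * (1 / τ) := by
    rw [mul_one_div, le_div_iff₀ hτ]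
    linarith
  calc 3 * η * (p * (q * (R ^ 2 * Y))) = 3 * (η * R ^ 2) * (p * q * Y) := by ring
    _ ≤ 3 * (ε * p * q * (1 / τ)) * (p * q * (2 * S + 2 * T)) := by gcongr
    _ = _ := by ring

set_option maxHeartbeats 1000000 in
/-- Expected progress of one iteration, written as a sum over all index quadruples. -/
lemma sum_step_le {n d : ℕ} (hn : 0 < n) (hd : 0 < d)
    {a : Fin n → Fin d → ℝ} {Xs : Fin d → Set ℝ} {G : Fin d → ℝ → ℝ}
    {Ys : Fin n → Set ℝ} {H : Fin n → ℝ → ℝ} {η τ ε R R' : ℝ} (hη : 0 < η) (hτ : 0 < τ)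
    (hε : 0 < ε) (hεn : ε * n ≤ 1 / 16384) (hεd : ε * d ≤ 1 / 16384)
    (hR : ∀ i, ∑ j, a i j ^ 2 ≤ R ^ 2) (hR' : ∀ j, ∑ i, a i j ^ 2 ≤ R' ^ 2)
    (hRs : η * τ * R ^ 2 ≤ ε * n * d) (hRs' : η * τ * R' ^ 2 ≤ ε * n * d)
    (hG : ∀ j, ConvexOn ℝ (Xs j) (fun z => G j z - (128 * ε * d) / 2 * z ^ 2))
    (hH : ∀ i, ConvexOn ℝ (Ys i) (fun z => H i z - (128 * ε * n) / 2 * z ^ 2))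
    {xs : Fin d → ℝ} {ys : Fin n → ℝ} (hxs : ∀ j, xs j ∈ Xs j) (hys : ∀ i, ys i ∈ Ys i)
    (hxopt : ∀ j, ∀ z ∈ Xs j, G j (xs j) + η * ((∑ l, a l j * ys l) / n) * xs j
      ≤ G j z + η * ((∑ l, a l j * ys l) / n) * z)
    (hyopt : ∀ i, ∀ z ∈ Ys i, H i (ys i) + -(τ * ((∑ l, a i l * xs l) / d)) * ys i
      ≤ H i z + -(τ * ((∑ l, a i l * xs l) / d)) * z)
    {xt : Fin d → ℝ} {yt : Fin n → ℝ} {x : Fin d → ℝ} {y : Fin n → ℝ}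
    {xb x' : Fin n × Fin n × Fin d × Fin d → Fin d → ℝ}
    {yb y' : Fin n × Fin n × Fin d × Fin d → Fin n → ℝ}
    (h : ∀ i i' j j', IsStep a Xs G Ys H η τ xt yt x y i i' j j'
      (xb (i, i', j, j')) (yb (i, i', j, j')) (x' (i, i', j, j')) (y' (i, i', j, j'))) :
    ∑ q, lyap η τ xs ys (x' q) (y' q)
      ≤ Fintype.card (Fin n × Fin n × Fin d × Fin d) *
        ((1 - 52 * ε) * lyap η τ xs ys x y + 12 * ε * lyap η τ xs ys xt yt) := by
  have hn' : (0 : ℝ) < n := by exact_mod_cast hn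
  have hd' : (0 : ℝ) < d := by exact_mod_cast hd
  have hmx : 0 ≤ 128 * ε * d := by positivity
  have hmy : 0 ≤ 128 * ε * n := by positivity
  -- `x̄_j` only depends on `(i', j)` and `ȳ_i` only on `(i, j')`
  obtain ⟨u, hu⟩ : ∃ u : Fin n → Fin d → ℝ, ∀ i i' j j', xb (i, i', j, j') j = u i' j :=
    ⟨fun i' j => xb (⟨0, hn⟩, i', j, ⟨0, hd⟩) j, fun i i' j j' =>
      (h i i' j j').xb_prox.unique hmx (hG j) (h ⟨0, hn⟩ i' j ⟨0, hd⟩).xb_prox⟩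
  obtain ⟨w, hw⟩ : ∃ w : Fin n → Fin d → ℝ, ∀ i i' j j', yb (i, i', j, j') i = w i j' :=
    ⟨fun i j' => yb (i, ⟨0, hn⟩, ⟨0, hd⟩, j') i, fun i i' j j' =>
      (h i i' j j').yb_prox.unique hmy (hH i) (h i ⟨0, hn⟩ ⟨0, hd⟩ j').yb_prox⟩
  have hstep := fun i i' j j' => (h i i' j j').progress hη hτ hmx hmy (by linarith) (by linarith)
    hG hH hxs hys hxopt hyopt
  simp only [hu, hw] at hstep
  obtain ⟨ρ, hρ⟩ : ∃ ρ : Fin n → Fin n → Fin d → ℝ, ∀ i i' j, ((∑ l, a l j * yt l) / (n : ℝ)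
      - (∑ l, a l j * ys l) / n - a i j * (yt i - ys i)) * (u i' j - xs j) = ρ i i' j :=
    ⟨_, fun _ _ _ => rfl⟩
  obtain ⟨σ, hσ⟩ : ∃ σ : Fin n → Fin d → Fin d → ℝ, ∀ i j j', ((∑ l, a i l * xt l) / (d : ℝ)
      - (∑ l, a i l * xs l) / d - a i j * (xt j - xs j)) * (w i j' - ys i) = σ i j j' :=
    ⟨_, fun _ _ _ => rfl⟩
  simp only [hρ, hσ] at hstep
  have hsum := Finset.sum_le_sum fun i (_ : i ∈ Finset.univ) =>
    Finset.sum_le_sum fun i' (_ : i' ∈ Finset.univ) =>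
    Finset.sum_le_sum fun j (_ : j ∈ Finset.univ) =>
    Finset.sum_le_sum fun j' (_ : j' ∈ Finset.univ) => hstep i i' j j'
  set U := ∑ i, ∑ j', (w i j' - y i) ^ 2 with hU
  set V := ∑ i', ∑ j, (u i' j - x j) ^ 2 with hV
  set Xt := ∑ j, (x j - xt j) ^ 2 with hXt
  set Yt := ∑ i, (y i - yt i) ^ 2 with hYt
  have zx : ∑ i, ∑ i', ∑ j, ∑ _j' : Fin d, ρ i i' j = 0 := by
    simp only [← hρ]
    rw [Finset.sum_comm]
    refine Finset.sum_eq_zero fun i' _ => ?_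
    rw [Finset.sum_comm]
    refine Finset.sum_eq_zero fun j _ => ?_
    rw [Finset.sum_comm]
    refine Finset.sum_eq_zero fun j' _ => ?_
    rw [← Finset.sum_mul]
    simp only [mul_sub, Finset.sum_sub_distrib, Finset.sum_const, Finset.card_univ,
      Fintype.card_fin, nsmul_eq_mul]
    field_simp
    ring
  have zy : ∑ i, ∑ _i' : Fin n, ∑ j, ∑ j', σ i j j' = 0 := by
    simp only [← hσ]
    refine Finset.sum_eq_zero fun i _ => Finset.sum_eq_zero fun i' _ => ?_
    rw [Finset.sum_comm]
    refine Finset.sum_eq_zero fun j' _ => ?_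
    rw [← Finset.sum_mul]
    simp only [mul_sub, Finset.sum_sub_distrib, Finset.sum_const, Finset.card_univ,
      Fintype.card_fin, nsmul_eq_mul]
    field_simp
    ring
  have s0 : ∑ _i : Fin n, ∑ _i' : Fin n, ∑ _j : Fin d, ∑ _j' : Fin d, lyap η τ xs ys x y
      = n * (n * (d * (d * lyap η τ xs ys x y))) := by
    simp
  have s1 : ∑ i, ∑ _i' : Fin n, ∑ j, ∑ j', a i j ^ 2 * (w i j' - y i) ^ 2 ≤ n * (R ^ 2 * U) := by
    have : ∀ i, ∑ _i' : Fin n, ∑ j, ∑ j', a i j ^ 2 * (w i j' - y i) ^ 2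
        = n * ((∑ j, a i j ^ 2) * ∑ j', (w i j' - y i) ^ 2) := by
      intro i
      simp [Finset.sum_mul_sum]
    rw [hU, Finset.mul_sum, Finset.mul_sum]
    refine Finset.sum_le_sum fun i _ => ?_
    rw [this]
    have := hR i
    gcongr
  have s2 : ∑ i, ∑ _i' : Fin n, ∑ j, ∑ _j' : Fin d, a i j ^ 2 * (y i - yt i) ^ 2
      ≤ n * (d * (R ^ 2 * Yt)) := by
    have : ∀ i, ∑ _i' : Fin n, ∑ j, ∑ _j' : Fin d, a i j ^ 2 * (y i - yt i) ^ 2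
        = n * (d * ((∑ j, a i j ^ 2) * (y i - yt i) ^ 2)) := by
      intro i
      simp [Finset.sum_mul, Finset.mul_sum]
    rw [hYt, Finset.mul_sum, Finset.mul_sum, Finset.mul_sum]
    refine Finset.sum_le_sum fun i _ => ?_
    rw [this]
    have := hR i
    gcongr
  have s3 : ∑ _i : Fin n, ∑ i', ∑ j, ∑ _j' : Fin d, a i' j ^ 2 * (y i' - yt i') ^ 2
      ≤ n * (d * (R ^ 2 * Yt)) := by
    rw [Finset.sum_comm]
    exact s2
  have s4 : ∑ i, ∑ i', ∑ j, ∑ _j' : Fin d, a i j ^ 2 * (u i' j - x j) ^ 2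
      ≤ d * (R' ^ 2 * V) := by
    have : ∑ i, ∑ i', ∑ j, ∑ _j' : Fin d, a i j ^ 2 * (u i' j - x j) ^ 2
        = ∑ i', ∑ j, d * ((∑ i, a i j ^ 2) * (u i' j - x j) ^ 2) := by
      rw [Finset.sum_comm]
      refine Finset.sum_congr rfl fun i' _ => ?_
      rw [Finset.sum_comm]
      refine Finset.sum_congr rfl fun j _ => ?_
      simp [Finset.sum_mul, Finset.mul_sum]
    rw [this, hV]
    simp only [Finset.mul_sum (s := Finset.univ) (a := R' ^ 2), Finset.mul_sum (a := (d : ℝ))]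
    refine Finset.sum_le_sum fun i' _ => Finset.sum_le_sum fun j _ => ?_
    have := hR' j
    gcongr
  have s5 : ∑ i, ∑ _i' : Fin n, ∑ j, ∑ _j' : Fin d, a i j ^ 2 * (x j - xt j) ^ 2
      ≤ n * (d * (R' ^ 2 * Xt)) := by
    have : ∑ i, ∑ _i' : Fin n, ∑ j, ∑ _j' : Fin d, a i j ^ 2 * (x j - xt j) ^ 2
        = ∑ j, n * (d * ((∑ i, a i j ^ 2) * (x j - xt j) ^ 2)) := by
      rw [Finset.sum_comm]
      simp only [Finset.sum_const, Finset.card_univ, Fintype.card_fin, nsmul_eq_mul]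
      rw [Finset.sum_comm, Finset.mul_sum]
      refine Finset.sum_congr rfl fun j _ => ?_
      rw [← Finset.mul_sum, ← Finset.sum_mul]
    rw [this, hXt, Finset.mul_sum, Finset.mul_sum, Finset.mul_sum]
    refine Finset.sum_le_sum fun j _ => ?_
    have := hR' j
    gcongr
  have s6 : ∑ i, ∑ _i' : Fin n, ∑ _j : Fin d, ∑ j', a i j' ^ 2 * (x j' - xt j') ^ 2
      ≤ n * (d * (R' ^ 2 * Xt)) := by
    refine le_trans (le_of_eq ?_) s5
    refine Finset.sum_congr rfl fun i _ => Finset.sum_congr rfl fun i' _ => ?_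
    rw [Finset.sum_comm]
  have s7 : ∑ i, ∑ _i' : Fin n, ∑ _j : Fin d, ∑ j', (w i j' - y i) ^ 2 = n * (d * U) := by
    simp [hU, Finset.mul_sum]
  have s8 : ∑ _i : Fin n, ∑ i', ∑ j, ∑ _j' : Fin d, (u i' j - x j) ^ 2 = n * (d * V) := by
    simp [hV, Finset.mul_sum]
  have s9 : ∑ _i : Fin n, ∑ _i' : Fin n, ∑ j, ∑ _j' : Fin d, (x j - xs j) ^ 2
      = n * (n * (d * ∑ j, (x j - xs j) ^ 2)) := by
    simp [Finset.mul_sum]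
  have s10 : ∑ i, ∑ _i' : Fin n, ∑ _j : Fin d, ∑ _j' : Fin d, (y i - ys i) ^ 2
      = n * (d * (d * ∑ i, (y i - ys i) ^ 2)) := by
    simp [Finset.mul_sum]
  rw [Fintype.sum_prod_type]
  simp only [Fintype.sum_prod_type]
  refine hsum.trans ?_
  simp only [Finset.sum_add_distrib, Finset.sum_sub_distrib, ← Finset.mul_sum _ _ (2 : ℝ),
    ← Finset.mul_sum _ _ (1 / (2 * η)), ← Finset.mul_sum _ _ (1 / (2 * τ)),
    ← Finset.mul_sum _ _ (3 * η), ← Finset.mul_sum _ _ (3 * τ),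
    ← Finset.mul_sum _ _ (128 * ε * d / 2 / η), ← Finset.mul_sum _ _ (128 * ε * n / 2 / τ),
    zx, zy, s0, s7, s8, s9, s10, Fintype.card_fin, Fintype.card_prod, Nat.cast_mul]
  have hXt2 := sum_sq_sub_le x xt xs
  have hYt2 := sum_sq_sub_le y yt ys
  rw [← hXt] at hXt2
  rw [← hYt] at hYt2
  have hU0 : 0 ≤ U := Finset.sum_nonneg fun i _ => Finset.sum_nonneg fun j _ => sq_nonneg _
  have hV0 : 0 ≤ V := Finset.sum_nonneg fun i _ => Finset.sum_nonneg fun j _ => sq_nonneg _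
  have hXt0 : 0 ≤ Xt := Finset.sum_nonneg fun j _ => sq_nonneg _
  have hYt0 : 0 ≤ Yt := Finset.sum_nonneg fun j _ => sq_nonneg _
  unfold lyap
  generalize ∑ j, (x j - xs j) ^ 2 = Sx at *
  generalize ∑ j, (xt j - xs j) ^ 2 = Tx at *
  generalize ∑ i, (y i - ys i) ^ 2 = Sy at *
  generalize ∑ i, (yt i - ys i) ^ 2 = Ty at *
  have b1 := noise_fresh hn' hd' hτ hεn hRs hU0
  have b2 := noise_fresh hd' hn' hη hεd (by linarith : τ * η * R' ^ 2 ≤ ε * d * n) hV0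
  have b3 := noise_reference hn' hd' hτ hε hRs hYt0 hYt2
  have b4 := noise_reference hd' hn' hη hε (by linarith : τ * η * R' ^ 2 ≤ ε * d * n) hXt0 hXt2
  have d1 := mul_le_mul_of_nonneg_left s1 (by positivity : 0 ≤ 3 * η)
  have d2 := mul_le_mul_of_nonneg_left s2 (by positivity : 0 ≤ 3 * η)
  have d3 := mul_le_mul_of_nonneg_left s3 (by positivity : 0 ≤ 3 * η)
  have d4 := mul_le_mul_of_nonneg_left s4 (by positivity : 0 ≤ 3 * τ)
  have d5 := mul_le_mul_of_nonneg_left s5 (by positivity : 0 ≤ 3 * τ)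
  have d6 := mul_le_mul_of_nonneg_left s6 (by positivity : 0 ≤ 3 * τ)
  have e1 : 128 * ε * d / 2 / η * (n * (n * (d * Sx))) = 64 * ε * (n * n * d * d * (Sx / η)) := by
    ring
  have e2 : 128 * ε * n / 2 / τ * (n * (d * (d * Sy))) = 64 * ε * (n * n * d * d * (Sy / τ)) := by
    ring
  linarith

/-! ### Sample paths and contraction over the stages -/

/-- The constants work because the fixed point of the recursion is `12/52 = 3/13` of `p 0`, and
`(1 - 52 ε) ^ T ≤ 1 / 53` by Bernoulli's inequality. -/
lemma recursion_bound {p : ℕ → ℝ} {ε : ℝ} {T : ℕ} (hε : 0 < ε) (hε1 : 52 * ε ≤ 1)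
    (hT : 1 ≤ ε * T) (hp0 : 0 ≤ p 0)
    (h : ∀ t < T, p (t + 1) ≤ (1 - 52 * ε) * p t + 12 * ε * p 0) :
    p T ≤ 3 / 5 * p 0 := by
  have hr : 0 ≤ 1 - 52 * ε := by linarith
  have key : ∀ t ≤ T, p t ≤ (3 / 13 + 10 / 13 * (1 - 52 * ε) ^ t) * p 0 := by
    intro t
    induction t with
    | zero => intro _; norm_num
    | succ t ih =>
      intro ht
      have h1 := h t (by omega)
      have h2 := mul_le_mul_of_nonneg_left (ih (by omega)) hr
      calc p (t + 1) ≤ _ := h1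
        _ ≤ (1 - 52 * ε) * ((3 / 13 + 10 / 13 * (1 - 52 * ε) ^ t) * p 0) + 12 * ε * p 0 := by
          linarith
        _ = _ := by ring
  have hb : 1 + (T : ℝ) * (52 * ε) ≤ (1 + 52 * ε) ^ T :=
    one_add_mul_le_pow (by linarith) T
  have hprod : (1 - 52 * ε) ^ T * (1 + 52 * ε) ^ T ≤ 1 := by
    rw [← mul_pow]
    exact pow_le_one₀ (by nlinarith) (by nlinarith)
  have hpow : (1 - 52 * ε) ^ T * 53 ≤ 1 := by
    refine le_trans (mul_le_mul_of_nonneg_left ?_ (pow_nonneg hr T)) hprod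
    linarith
  refine (key T le_rfl).trans (mul_le_mul_of_nonneg_right ?_ hp0)
  linarith

/-- Replace the `t`-th sample of the `k`-th stage by `q`. -/
def resample {K T : ℕ} {Q : Type*} (ω : Fin K → Fin T → Q) (k : Fin K) (t : Fin T) (q : Q) :
    Fin K → Fin T → Q :=
  Function.update ω k (Function.update (ω k) t q)

/-- Resampling one index quadruple preserves the uniform distribution on sample paths. -/
lemma sum_resample {K T : ℕ} {Q : Type*} [Fintype Q] (k : Fin K) (t : Fin T)
    (f : (Fin K → Fin T → Q) → ℝ) :
    ∑ ω, ∑ q, f (resample ω k t q) = Fintype.card Q * ∑ ω, f ω := by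
  -- exchanging the old sample with the new one is an involution on pairs `(ω, q)`
  have hinv : Function.Involutive
      (fun s : (Fin K → Fin T → Q) × Q => (resample s.1 k t s.2, s.1 k t)) := by
    rintro ⟨ω, q⟩
    simp [resample]
  rw [← Fintype.sum_prod_type' (f := fun ω q => f (resample ω k t q))]
  have := Equiv.sum_comp hinv.toPerm (fun s : (Fin K → Fin T → Q) × Q => f s.1)
  simp only [Function.Involutive.coe_toPerm] at this
  rw [this, Fintype.sum_prod_type]
  simp [Finset.mul_sum]

/-- Contraction of the Lyapunov function over all outer stages, for the scaled proximal terms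
`G j`, `H i` and a step parameter `ε` with `ε T ≥ 1`. -/
lemma contraction {n d K T : ℕ} (hn : 0 < n) (hd : 0 < d)
    {a : Fin n → Fin d → ℝ} {Xs : Fin d → Set ℝ} {G : Fin d → ℝ → ℝ}
    {Ys : Fin n → Set ℝ} {H : Fin n → ℝ → ℝ} {η τ ε R R' : ℝ} (hη : 0 < η) (hτ : 0 < τ)
    (hε : 0 < ε) (hεn : ε * n ≤ 1 / 16384) (hεd : ε * d ≤ 1 / 16384) (hT : 1 ≤ ε * T)
    (hR : ∀ i, ∑ j, a i j ^ 2 ≤ R ^ 2) (hR' : ∀ j, ∑ i, a i j ^ 2 ≤ R' ^ 2)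
    (hRs : η * τ * R ^ 2 ≤ ε * n * d) (hRs' : η * τ * R' ^ 2 ≤ ε * n * d)
    (hG : ∀ j, ConvexOn ℝ (Xs j) (fun z => G j z - (128 * ε * d) / 2 * z ^ 2))
    (hH : ∀ i, ConvexOn ℝ (Ys i) (fun z => H i z - (128 * ε * n) / 2 * z ^ 2))
    {xs : Fin d → ℝ} {ys : Fin n → ℝ} (hxs : ∀ j, xs j ∈ Xs j) (hys : ∀ i, ys i ∈ Ys i)
    (hxopt : ∀ j, ∀ z ∈ Xs j, G j (xs j) + η * ((∑ l, a l j * ys l) / n) * xs j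
      ≤ G j z + η * ((∑ l, a l j * ys l) / n) * z)
    (hyopt : ∀ i, ∀ z ∈ Ys i, H i (ys i) + -(τ * ((∑ l, a i l * xs l) / d)) * ys i
      ≤ H i z + -(τ * ((∑ l, a i l * xs l) / d)) * z)
    {xt0 : Fin d → ℝ} {yt0 : Fin n → ℝ}
    {xtil : (Fin K → Fin T → Fin n × Fin n × Fin d × Fin d) → ℕ → Fin d → ℝ}
    {ytil : (Fin K → Fin T → Fin n × Fin n × Fin d × Fin d) → ℕ → Fin n → ℝ}
    {xI xB : (Fin K → Fin T → Fin n × Fin n × Fin d × Fin d) → Fin K → ℕ → Fin d → ℝ}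
    {yI yB : (Fin K → Fin T → Fin n × Fin n × Fin d × Fin d) → Fin K → ℕ → Fin n → ℝ}
    (hx0 : ∀ ω, xtil ω 0 = xt0) (hy0 : ∀ ω, ytil ω 0 = yt0)
    (hxI0 : ∀ ω (k : Fin K), xI ω k 0 = xtil ω (k : ℕ))
    (hyI0 : ∀ ω (k : Fin K), yI ω k 0 = ytil ω (k : ℕ))
    (hxT : ∀ ω (k : Fin K), xtil ω ((k : ℕ) + 1) = xI ω k T)
    (hyT : ∀ ω (k : Fin K), ytil ω ((k : ℕ) + 1) = yI ω k T)
    (hstep : ∀ ω (k : Fin K) (t : Fin T) i i' j j', ω k t = (i, i', j, j') →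
      IsStep a Xs G Ys H η τ (xtil ω k) (ytil ω k) (xI ω k t) (yI ω k t) i i' j j'
        (xB ω k t) (yB ω k t) (xI ω k ((t : ℕ) + 1)) (yI ω k ((t : ℕ) + 1))) :
    ∑ ω, lyap η τ xs ys (xtil ω K) (ytil ω K)
      ≤ (3 / 5) ^ K * (Fintype.card (Fin K → Fin T → Fin n × Fin n × Fin d × Fin d)
        * lyap η τ xs ys xt0 yt0) := by
  have hmx : 0 ≤ 128 * ε * d := by positivity
  have hmy : 0 ≤ 128 * ε * n := by positivity
  have hlyap : ∀ x y, 0 ≤ lyap η τ xs ys x y := fun x y => by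
    unfold lyap
    positivity
  -- the iterates are adapted: they only depend on the samples drawn so far
  have hinner : ∀ ω ω' (k : Fin K), xtil ω k = xtil ω' k → ytil ω k = ytil ω' k →
      ∀ t ≤ T, (∀ s : Fin T, (s : ℕ) < t → ω k s = ω' k s) →
        xI ω k t = xI ω' k t ∧ yI ω k t = yI ω' k t := by
    intro ω ω' k hx hy t
    induction t with
    | zero =>
      intro _ _
      rw [hxI0, hxI0, hyI0, hyI0]
      exact ⟨hx, hy⟩
    | succ t ih =>
      intro ht hω
      obtain ⟨h1, h2⟩ := ih (by omega) fun s hs => hω s (by omega)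
      have e := hω ⟨t, ht⟩ (Nat.lt_succ_self t)
      have s1 := hstep ω k ⟨t, ht⟩ _ _ _ _ rfl
      have s2 := hstep ω' k ⟨t, ht⟩ _ _ _ _ rfl
      rw [← e, ← hx, ← hy] at s2
      simp only at s1 s2
      rw [← h1, ← h2] at s2
      exact s1.unique hmx hmy hG hH s2
  have houter : ∀ ω ω' (k : ℕ), k ≤ K → (∀ l : Fin K, (l : ℕ) < k → ω l = ω' l) →
      xtil ω k = xtil ω' k ∧ ytil ω k = ytil ω' k := by
    intro ω ω' k
    induction k with
    | zero =>
      intro _ _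
      rw [hx0, hx0, hy0, hy0]
      exact ⟨rfl, rfl⟩
    | succ k ih =>
      intro hk hω
      obtain ⟨h1, h2⟩ := ih (by omega) fun s hs => hω s (by omega)
      have e := hω ⟨k, hk⟩ (Nat.lt_succ_self k)
      have := hinner ω ω' ⟨k, hk⟩ h1 h2 T le_rfl fun s _ => by rw [e]
      rw [← hxT, ← hyT, ← hxT, ← hyT] at this
      exact this
  have hstage : ∀ k : Fin K, ∑ ω, lyap η τ xs ys (xtil ω ((k : ℕ) + 1)) (ytil ω ((k : ℕ) + 1))
      ≤ 3 / 5 * ∑ ω, lyap η τ xs ys (xtil ω k) (ytil ω k) := by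
    intro k
    have hrec := recursion_bound (p := fun t => ∑ ω, lyap η τ xs ys (xI ω k t) (yI ω k t))
      (T := T) hε ?_ hT (Finset.sum_nonneg fun ω _ => hlyap _ _) ?_
    · simpa only [hxT, hyT, hxI0, hyI0] using hrec
    · have : (1 : ℝ) ≤ n := by exact_mod_cast hn
      nlinarith
    · intro t ht
      have hQ : (0 : ℝ) < Fintype.card (Fin n × Fin n × Fin d × Fin d) := by
        have : Nonempty (Fin n × Fin n × Fin d × Fin d) :=
          ⟨(⟨0, hn⟩, ⟨0, hn⟩, ⟨0, hd⟩, ⟨0, hd⟩)⟩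
        exact_mod_cast Fintype.card_pos
      refine le_of_mul_le_mul_left ?_ hQ
      rw [← sum_resample k ⟨t, ht⟩, Finset.mul_sum, Finset.mul_sum, ← Finset.sum_add_distrib,
        Finset.mul_sum]
      refine Finset.sum_le_sum fun ω _ => ?_
      have hxt : ∀ q, xtil (resample ω k ⟨t, ht⟩ q) k = xtil ω k ∧
          ytil (resample ω k ⟨t, ht⟩ q) k = ytil ω k := fun q =>
        houter _ _ k k.2.le fun l hl => by
          simp [resample, Function.update_of_ne (Fin.ne_of_lt hl)]
      have hxI : ∀ q, xI (resample ω k ⟨t, ht⟩ q) k t = xI ω k t ∧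
          yI (resample ω k ⟨t, ht⟩ q) k t = yI ω k t := fun q =>
        hinner _ _ k (hxt q).1 (hxt q).2 t ht.le fun s hs => by
          have : s ≠ ⟨t, ht⟩ := Fin.ne_of_lt hs
          simp [resample, Function.update_of_ne this]
      rw [hxI0, hyI0]
      refine sum_step_le hn hd hη hτ hε hεn hεd hR hR' hRs hRs' hG hH hxs hys hxopt hyopt
        (xb := fun q => xB (resample ω k ⟨t, ht⟩ q) k t)
        (yb := fun q => yB (resample ω k ⟨t, ht⟩ q) k t) ?_
      intro i i' j j'
      have := hstep (resample ω k ⟨t, ht⟩ (i, i', j, j')) k ⟨t, ht⟩ i i' j j' (by simp [resample])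
      rw [(hxt _).1, (hxt _).2] at this
      simp only at this
      rw [(hxI _).1, (hxI _).2] at this
      exact this
  have hall : ∀ k ≤ K, ∑ ω, lyap η τ xs ys (xtil ω k) (ytil ω k)
      ≤ (3 / 5) ^ k * (Fintype.card (Fin K → Fin T → Fin n × Fin n × Fin d × Fin d)
        * lyap η τ xs ys xt0 yt0) := by
    intro k
    induction k with
    | zero =>
      intro _
      simp only [hx0, hy0, Finset.sum_const, Finset.card_univ, nsmul_eq_mul, pow_zero, one_mul]
      exact le_rfl
    | succ k ih =>
      intro hk
      have h1 := hstage ⟨k, hk⟩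
      have h2 := ih (by omega)
      calc _ ≤ _ := h1
        _ ≤ 3 / 5 * ((3 / 5) ^ k * _) := mul_le_mul_of_nonneg_left h2 (by norm_num)
        _ = _ := by ring
  exact hall K le_rfl

/-! ### Linear convergence -/

lemma sum_update_eq {m : ℕ} (f : Fin m → ℝ → ℝ) (x : Fin m → ℝ) (j : Fin m) (z : ℝ) :
    ∑ l, f l (Function.update x j z l) = ∑ l, f l (x l) + (f j z - f j (x j)) := by
  have : ∑ l, (f l (Function.update x j z l) - f l (x l)) = f j z - f j (x j) := by
    rw [Finset.sum_eq_single j]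
    · simp
    · intro l _ hl
      simp [Function.update_of_ne hl]
    · simp
  rw [Finset.sum_sub_distrib] at this
  linarith

lemma convexOn_scale {S : Set ℝ} {f : ℝ → ℝ} {s m m' : ℝ} (hs : 0 ≤ s)
    (hf : ConvexOn ℝ S (fun z => f z - m / 2 * z ^ 2)) (hm : s * m = m') :
    ConvexOn ℝ S (fun z => s * f z - m' / 2 * z ^ 2) := by
  have := hf.smul hs
  refine this.congr fun z _ => ?_
  change s * (f z - m / 2 * z ^ 2) = s * f z - m' / 2 * z ^ 2
  rw [← hm]
  ring

/-- Theorem 3: linear convergence of SPD1-VR.  There is a universal constant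
`c > 0` (independent of the problem data) such that for every instance with each
`φ_i` `(1/γ)`-smooth, `g` `μ`-strongly convex, condition numbers `κ = R²/(μγ) ≥ 1`,
`κ' = dR'²/(nμγ) ≥ 1`, step sizes as in (step_size), inner-loop length
`T ≥ c·max{dκ, nκ'}`, and any saddle point `(x*, y*)`, the outer iterates satisfy
`E[Δ_K] ≤ (3/5)^K·Δ_0` where `Δ_k = ‖x̃^k − x*‖²/η + ‖ỹ^k − y*‖²/τ`.  The
randomness is the family `ω : Fin K → Fin T → Fin n × Fin n × Fin d × Fin d` of
sampled index quadruples `(i_t, i'_t, j_t, j'_t)`; expectation is the average over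
all sample paths; the iterates are characterized by their proximal minimization
properties. -/
theorem stmt_4 :
    ∃ c : ℝ, 0 < c ∧
    ∀ (n d K T : ℕ), 0 < n → 0 < d →
    ∀ (a : Fin n → Fin d → ℝ) (R R' μ γ : ℝ),
    IsGreatest (Set.range fun i => Real.sqrt (∑ j, (a i j) ^ 2)) R →
    IsGreatest (Set.range fun j => Real.sqrt (∑ i, (a i j) ^ 2)) R' →
    0 < μ → 0 < γ →
    ∀ (Xs : Fin d → Set ℝ), (∀ j, Convex ℝ (Xs j)) → (∀ j, IsClosed (Xs j)) →
    ∀ (g : Fin d → ℝ → ℝ), (∀ j, ConvexOn ℝ (Xs j) (g j)) →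
    (∀ j, LowerSemicontinuousOn (g j) (Xs j)) →
    -- `g` is `μ`-strongly convex (coordinatewise, equivalently for separable `g`)
    (∀ j, ConvexOn ℝ (Xs j) (fun z => g j z - μ / 2 * z ^ 2)) →
    ∀ (φ : Fin n → ℝ → ℝ), (∀ i, ConvexOn ℝ Set.univ (φ i)) →
    -- each `φ_i` is `(1/γ)`-smooth
    (∀ i, Differentiable ℝ (φ i)) →
    (∀ i, ∀ u v : ℝ, |deriv (φ i) u - deriv (φ i) v| ≤ (1 / γ) * |u - v|) →
    ∀ (XX : Set (Fin d → ℝ)), XX = {x | ∀ j, x j ∈ Xs j} →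
    ∀ (YY : Set (Fin n → ℝ)), YY = {y | ∀ i, y i ∈ Ydom (φ i)} →
    ∀ (F : (Fin d → ℝ) → (Fin n → ℝ) → ℝ),
    (∀ x y, F x y = (1 / (n : ℝ)) * (∑ i, y i * ∑ j, a i j * x j)
        - (1 / (n : ℝ)) * (∑ i, phiStar (φ i) (y i)) + ∑ j, g j (x j)) →
    -- condition numbers and step sizes
    ∀ (κ κ' η τ : ℝ),
    κ = R ^ 2 / (μ * γ) → κ' = (d : ℝ) * R' ^ 2 / ((n : ℝ) * μ * γ) →
    1 ≤ κ → 1 ≤ κ' →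
    η = γ / (128 * R ^ 2) * min ((d : ℝ) * κ / ((n : ℝ) * κ')) 1 →
    τ = (n : ℝ) * μ / (128 * R' ^ 2) * min ((n : ℝ) * κ' / ((d : ℝ) * κ)) 1 →
    -- inner-loop length
    c * max ((d : ℝ) * κ) ((n : ℝ) * κ') ≤ (T : ℝ) →
    -- a saddle point of `F` on `X × Y`
    ∀ (xstar : Fin d → ℝ) (ystar : Fin n → ℝ), xstar ∈ XX → ystar ∈ YY →
    (∀ y ∈ YY, F xstar y ≤ F xstar ystar) →
    (∀ x ∈ XX, F xstar ystar ≤ F x ystar) →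
    -- initialization
    ∀ (xt0 : Fin d → ℝ) (yt0 : Fin n → ℝ), xt0 ∈ XX → yt0 ∈ YY →
    -- outer iterates, inner iterates, and intermediate (bar) iterates
    ∀ (xtil : (Fin K → Fin T → Fin n × Fin n × Fin d × Fin d) → ℕ → Fin d → ℝ)
      (ytil : (Fin K → Fin T → Fin n × Fin n × Fin d × Fin d) → ℕ → Fin n → ℝ)
      (xI : (Fin K → Fin T → Fin n × Fin n × Fin d × Fin d) → Fin K → ℕ → Fin d → ℝ)
      (yI : (Fin K → Fin T → Fin n × Fin n × Fin d × Fin d) → Fin K → ℕ → Fin n → ℝ)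
      (xB : (Fin K → Fin T → Fin n × Fin n × Fin d × Fin d) → Fin K → ℕ → Fin d → ℝ)
      (yB : (Fin K → Fin T → Fin n × Fin n × Fin d × Fin d) → Fin K → ℕ → Fin n → ℝ),
    (∀ ω, xtil ω 0 = xt0) → (∀ ω, ytil ω 0 = yt0) →
    (∀ ω (k : Fin K), xI ω k 0 = xtil ω (k : ℕ)) →
    (∀ ω (k : Fin K), yI ω k 0 = ytil ω (k : ℕ)) →
    (∀ ω (k : Fin K), xtil ω ((k : ℕ) + 1) = xI ω k T) →
    (∀ ω (k : Fin K), ytil ω ((k : ℕ) + 1) = yI ω k T) →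
    -- `x̄^t`: proximal step at coordinate `j_t` using sample `i'_t`
    (∀ ω (k : Fin K) (t : Fin T) (i i' : Fin n) (j j' : Fin d), ω k t = (i, i', j, j') →
      (∀ l, l ≠ j → xB ω k (t : ℕ) l = xI ω k (t : ℕ) l) ∧
      xB ω k (t : ℕ) j ∈ Xs j ∧
      ∀ z ∈ Xs j,
        η * g j (xB ω k (t : ℕ) j) +
            (xB ω k (t : ℕ) j - (xI ω k (t : ℕ) j -
              η * (a i' j * (yI ω k (t : ℕ) i' - ytil ω (k : ℕ) i')
                + (∑ l, a l j * ytil ω (k : ℕ) l) / (n : ℝ)))) ^ 2 / 2 ≤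
          η * g j z +
            (z - (xI ω k (t : ℕ) j -
              η * (a i' j * (yI ω k (t : ℕ) i' - ytil ω (k : ℕ) i')
                + (∑ l, a l j * ytil ω (k : ℕ) l) / (n : ℝ)))) ^ 2 / 2) →
    -- `ȳ^t`: proximal step at coordinate `i_t` using sample `j'_t`
    (∀ ω (k : Fin K) (t : Fin T) (i i' : Fin n) (j j' : Fin d), ω k t = (i, i', j, j') →
      (∀ l, l ≠ i → yB ω k (t : ℕ) l = yI ω k (t : ℕ) l) ∧
      yB ω k (t : ℕ) i ∈ Ydom (φ i) ∧
      ∀ z ∈ Ydom (φ i),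
        (τ / (d : ℝ)) * phiStar (φ i) (yB ω k (t : ℕ) i) +
            (yB ω k (t : ℕ) i - (yI ω k (t : ℕ) i +
              τ * (a i j' * (xI ω k (t : ℕ) j' - xtil ω (k : ℕ) j')
                + (∑ l, a i l * xtil ω (k : ℕ) l) / (d : ℝ)))) ^ 2 / 2 ≤
          (τ / (d : ℝ)) * phiStar (φ i) z +
            (z - (yI ω k (t : ℕ) i +
              τ * (a i j' * (xI ω k (t : ℕ) j' - xtil ω (k : ℕ) j')
                + (∑ l, a i l * xtil ω (k : ℕ) l) / (d : ℝ)))) ^ 2 / 2) →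
    -- extragradient update for `x^{t+1}` at coordinate `j_t`
    (∀ ω (k : Fin K) (t : Fin T) (i i' : Fin n) (j j' : Fin d), ω k t = (i, i', j, j') →
      (∀ l, l ≠ j → xI ω k ((t : ℕ) + 1) l = xI ω k (t : ℕ) l) ∧
      xI ω k ((t : ℕ) + 1) j ∈ Xs j ∧
      ∀ z ∈ Xs j,
        η * g j (xI ω k ((t : ℕ) + 1) j) +
            (xI ω k ((t : ℕ) + 1) j - (xI ω k (t : ℕ) j -
              η * (a i j * (yB ω k (t : ℕ) i - ytil ω (k : ℕ) i)
                + (∑ l, a l j * ytil ω (k : ℕ) l) / (n : ℝ)))) ^ 2 / 2 ≤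
          η * g j z +
            (z - (xI ω k (t : ℕ) j -
              η * (a i j * (yB ω k (t : ℕ) i - ytil ω (k : ℕ) i)
                + (∑ l, a l j * ytil ω (k : ℕ) l) / (n : ℝ)))) ^ 2 / 2) →
    -- extragradient update for `y^{t+1}` at coordinate `i_t`
    (∀ ω (k : Fin K) (t : Fin T) (i i' : Fin n) (j j' : Fin d), ω k t = (i, i', j, j') →
      (∀ l, l ≠ i → yI ω k ((t : ℕ) + 1) l = yI ω k (t : ℕ) l) ∧
      yI ω k ((t : ℕ) + 1) i ∈ Ydom (φ i) ∧
      ∀ z ∈ Ydom (φ i),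
        (τ / (d : ℝ)) * phiStar (φ i) (yI ω k ((t : ℕ) + 1) i) +
            (yI ω k ((t : ℕ) + 1) i - (yI ω k (t : ℕ) i +
              τ * (a i j * (xB ω k (t : ℕ) j - xtil ω (k : ℕ) j)
                + (∑ l, a i l * xtil ω (k : ℕ) l) / (d : ℝ)))) ^ 2 / 2 ≤
          (τ / (d : ℝ)) * phiStar (φ i) z +
            (z - (yI ω k (t : ℕ) i +
              τ * (a i j * (xB ω k (t : ℕ) j - xtil ω (k : ℕ) j)
                + (∑ l, a i l * xtil ω (k : ℕ) l) / (d : ℝ)))) ^ 2 / 2) →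
    -- conclusion: E[Δ_K] ≤ (3/5)^K · Δ_0
    (∑ ω : Fin K → Fin T → Fin n × Fin n × Fin d × Fin d,
        ((∑ j, (xtil ω K j - xstar j) ^ 2) / η + (∑ i, (ytil ω K i - ystar i) ^ 2) / τ)) /
      (Fintype.card (Fin K → Fin T → Fin n × Fin n × Fin d × Fin d) : ℝ)
      ≤ (3 / 5 : ℝ) ^ K *
        ((∑ j, (xt0 j - xstar j) ^ 2) / η + (∑ i, (yt0 i - ystar i) ^ 2) / τ) := by
  refine ⟨16384, by norm_num, ?_⟩
  intro n d K T hn hd a R R' μ γ hR hR' hμ hγ Xs _ _ g _ _ hg φ _ hφd hφL XX hXX YY hYY F hF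
    κ κ' η τ hκ hκ' hκ1 hκ1' hη hτ hT xs ys hxs hys hsy hsx xt0 yt0 _ _ xtil ytil xI yI xB yB
    hx0 hy0 hxI0 hyI0 hxT hyT hxB hyB hxN hyN
  subst hXX hYY
  have hn' : (0 : ℝ) < n := by exact_mod_cast hn
  have hd' : (0 : ℝ) < d := by exact_mod_cast hd
  have hR0 : 0 < R ^ 2 := by
    rcases (sq_nonneg R).eq_or_lt with h | h
    · rw [← h, zero_div] at hκ
      linarith
    · exact h
  have hR0' : 0 < R' ^ 2 := by
    rcases (sq_nonneg R').eq_or_lt with h | h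
    · rw [← h, mul_zero, zero_div] at hκ'
      linarith
    · exact h
  have hRne : R ≠ 0 := pow_ne_zero_iff two_ne_zero |>.1 hR0.ne'
  have hRne' : R' ≠ 0 := pow_ne_zero_iff two_ne_zero |>.1 hR0'.ne'
  set M := max ((d : ℝ) * κ) (n * κ') with hM
  have hMd : (d : ℝ) * κ ≤ M := le_max_left _ _
  have hMn : (n : ℝ) * κ' ≤ M := le_max_right _ _
  have hA : 0 < (d : ℝ) * κ := by positivity
  have hB : 0 < (n : ℝ) * κ' := by positivity
  have hM0 : 0 < M := hA.trans_le hMd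
  have hmin : ∀ A B : ℝ, 0 < A → 0 < B → min (A / B) 1 = A / max A B := by
    intro A B hA hB
    rcases le_total A B with h | h
    · rw [max_eq_right h, min_eq_left ((div_le_one hB).2 h)]
    · rw [max_eq_left h, min_eq_right ((one_le_div hB).2 h), div_self hA.ne']
  -- the step sizes in closed form
  have hη' : η = d / (128 * μ * M) := by
    rw [hη, hmin _ _ hA hB, ← hM, hκ]
    field_simp
  have hτ' : τ = n * d / (128 * γ * M) := by
    rw [hτ, hmin _ _ hB hA, max_comm, ← hM, hκ']
    field_simp
  have hη0 : 0 < η := by rw [hη']; positivity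
  have hτ0 : 0 < τ := by rw [hτ']; positivity
  have hκm : (d : ℝ) * R ^ 2 / (μ * γ) = d * κ := by rw [hκ]; ring
  have hκm' : (d : ℝ) * R' ^ 2 / (μ * γ) = n * κ' := by rw [hκ']; field_simp
  have hRs : η * τ * R ^ 2 ≤ 1 / (16384 * M) * n * d := by
    have : η * τ * R ^ 2 = 1 / (16384 * M) * n * d * ((d * κ) / M) := by
      rw [hη', hτ', ← hκm]
      field_simp
      ring
    rw [this]
    exact mul_le_of_le_one_right (by positivity) ((div_le_one hM0).2 hMd)
  have hRs' : η * τ * R' ^ 2 ≤ 1 / (16384 * M) * n * d := by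
    have : η * τ * R' ^ 2 = 1 / (16384 * M) * n * d * ((n * κ') / M) := by
      rw [hη', hτ', ← hκm']
      field_simp
      ring
    rw [this]
    exact mul_le_of_le_one_right (by positivity) ((div_le_one hM0).2 hMn)
  have hnM : (n : ℝ) ≤ M := le_trans (le_mul_of_one_le_right hn'.le hκ1') hMn
  have hdM : (d : ℝ) ≤ M := le_trans (le_mul_of_one_le_right hd'.le hκ1) hMd
  have hεn : 1 / (16384 * M) * n ≤ 1 / 16384 := by
    rw [one_div_mul_eq_div, div_le_div_iff₀ (by positivity) (by norm_num)]
    linarith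
  have hεd : 1 / (16384 * M) * d ≤ 1 / 16384 := by
    rw [one_div_mul_eq_div, div_le_div_iff₀ (by positivity) (by norm_num)]
    linarith
  have hεT : 1 ≤ 1 / (16384 * M) * T := by
    rw [one_div_mul_eq_div, one_le_div (by positivity)]
    exact hT
  have hrow : ∀ i, ∑ j, a i j ^ 2 ≤ R ^ 2 := fun i => (Real.sqrt_le_iff.1 (hR.2 ⟨i, rfl⟩)).2
  have hcol : ∀ j, ∑ i, a i j ^ 2 ≤ R' ^ 2 := fun j => (Real.sqrt_le_iff.1 (hR'.2 ⟨j, rfl⟩)).2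
  have hG : ∀ j, ConvexOn ℝ (Xs j)
      (fun z => η * g j z - (128 * (1 / (16384 * M)) * d) / 2 * z ^ 2) := fun j =>
    convexOn_scale hη0.le (hg j) (by rw [hη']; field_simp; norm_num)
  have hH : ∀ i, ConvexOn ℝ (Ydom (φ i))
      (fun z => τ / d * phiStar (φ i) z - (128 * (1 / (16384 * M)) * n) / 2 * z ^ 2) := fun i =>
    convexOn_scale (by positivity) (phiStar_strongConvex hγ (hφd i) (hφL i))
      (by rw [hτ']; field_simp; norm_num)
  -- coordinatewise optimality of the saddle point
  have hxopt : ∀ j, ∀ z ∈ Xs j, η * g j (xs j) + η * ((∑ l, a l j * ys l) / n) * xs j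
      ≤ η * g j z + η * ((∑ l, a l j * ys l) / n) * z := by
    intro j z hz
    have h := hsx (Function.update xs j z) (fun l => by
      by_cases hl : l = j
      · subst hl; simpa using hz
      · rw [Function.update_of_ne hl]; exact hxs l)
    have hswap : ∀ x : Fin d → ℝ, ∑ i, ys i * ∑ l, a i l * x l
        = ∑ l, (∑ i, a i l * ys i) * x l := by
      intro x
      simp only [Finset.mul_sum, Finset.sum_mul]
      rw [Finset.sum_comm]
      exact Finset.sum_congr rfl fun l _ => Finset.sum_congr rfl fun i _ => by ring
    rw [hF, hF, hswap, hswap, sum_update_eq (fun l u => (∑ i, a i l * ys i) * u),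
      sum_update_eq (fun l u => g l u)] at h
    have h' : g j (xs j) + (∑ l, a l j * ys l) / n * xs j
        ≤ g j z + (∑ l, a l j * ys l) / n * z := by
      simp only [div_eq_inv_mul] at h ⊢
      linarith
    have := mul_le_mul_of_nonneg_left h' hη0.le
    linarith
  have hyopt : ∀ i, ∀ z ∈ Ydom (φ i),
      τ / d * phiStar (φ i) (ys i) + -(τ * ((∑ l, a i l * xs l) / d)) * ys i
        ≤ τ / d * phiStar (φ i) z + -(τ * ((∑ l, a i l * xs l) / d)) * z := by
    intro i z hz
    have h := hsy (Function.update ys i z) (fun l => by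
      by_cases hl : l = i
      · subst hl; simpa using hz
      · rw [Function.update_of_ne hl]; exact hys l)
    rw [hF, hF, sum_update_eq (fun l u => u * ∑ j, a l j * xs j),
      sum_update_eq (fun l u => phiStar (φ l) u)] at h
    have h' : 1 / (n : ℝ) * (phiStar (φ i) (ys i) - ys i * ∑ j, a i j * xs j)
        ≤ 1 / (n : ℝ) * (phiStar (φ i) z - z * ∑ j, a i j * xs j) := by
      linarith
    have h'' := le_of_mul_le_mul_left h' (by positivity)
    have := mul_le_mul_of_nonneg_left h'' (by positivity : 0 ≤ τ / d)
    simp only [div_eq_mul_inv] at this ⊢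
    linarith
  have hfin := contraction hn hd hη0 hτ0 (by positivity) hεn hεd hεT hrow hcol hRs hRs' hG hH
    hxs hys hxopt hyopt hx0 hy0 hxI0 hyI0 hxT hyT (xB := xB) (yB := yB)
    (fun ω k t i i' j j' hq =>
      ⟨(hxB ω k t i i' j j' hq).2, (hyB ω k t i i' j j' hq).2,
        (hxN ω k t i i' j j' hq).1, (hxN ω k t i i' j j' hq).2,
        (hyN ω k t i i' j j' hq).1, (hyN ω k t i i' j j' hq).2⟩)
  have hcard : (0 : ℝ) < Fintype.card (Fin K → Fin T → Fin n × Fin n × Fin d × Fin d) := by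
    have : Nonempty (Fin K → Fin T → Fin n × Fin n × Fin d × Fin d) :=
      ⟨fun _ _ => (⟨0, hn⟩, ⟨0, hn⟩, ⟨0, hd⟩, ⟨0, hd⟩)⟩
    exact_mod_cast Fintype.card_pos
  rw [div_le_iff₀ hcard]
  refine hfin.trans (le_of_eq ?_)
  unfold lyap
  ring
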